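/- Let L be a profinite complete lattice. The following are equivalent: (i) L is join semidistributive; (ii) L is completely join semidistributive; (iii) for every cofinite congruence ≡ on L, the quotient lattice L/≡ is join semidistributive; (iv) every widely generated element of L has a canonical join representation; (v) every finitely generated element of L has a canonical join representation. -/

import Mathlib

/-!
The proof runs around the cycle (ii) → (i) → (iii) → (ii) and (ii) → (iv) → (v) → (iii).

The main tool is the map `piDown r` sending an element to the least element of its `r`-class.
It is monotone and commutes with binary joins, so a relation `x ∨ y ≡ z` modulo a complete
congruence lifts to the equation `π↓x ∨ π↓y = π↓z`.

* (i) → (iii) is immediate from this lifting.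
* (iii) → (ii): if `⋀X ∨ y ≠ z`, a cofinite congruence separates the two sides; modulo this
  congruence `X` may be replaced by a finite set of representatives, which contradicts (iii).
* (ii) → (iv): if `x` is widely generated, each lower cover `x' ⋖ x` yields, by complete join
  semidistributivity, a least `j` with `j ∨ x' = x`; these `j` form the canonical join
  representation of `x`.
* (iv) → (v): finitely generated elements are widely generated, because among the finitely many
  classes meeting `[y, x)` there is a maximal one, and the join of its elements below `x` is a
  lower cover of `x`.
* (v) → (iii): after lifting, `z = π↓z` is finitely generated, and every canonical joinand `u` of
  `z` satisfies `u ≤ x` or `u ≤ y` for each `x ∈ X`; hence `u ≤ y` or `u ≤ ⋀X`.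
-/


/-- An element `x` of a poset is widely generated if every `y < x` lies below
some lower cover of `x`. -/
def WidelyGenerated {α : Type*} [PartialOrder α] (x : α) : Prop :=
  ∀ y : α, y < x → ∃ x' : α, x' ⋖ x ∧ y ≤ x'

/-- A canonical join representation of `x`: `⋁U = x`, no proper subset of `U`
has join `x` (irredundancy), and `U ≪ V` for every `V` with `⋁V = x`. -/
def IsCanonicalJoinRep {L : Type*} [CompleteLattice L] (U : Set L) (x : L) : Prop :=
  sSup U = x ∧ (∀ U' : Set L, U' ⊂ U → sSup U' ≠ x) ∧
    ∀ V : Set L, sSup V = x → ∀ u ∈ U, ∃ v ∈ V, u ≤ v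

/-- A complete lattice congruence: an equivalence relation such that whenever
`xᵢ ≡ yᵢ` for all `i`, also `⋁ᵢ xᵢ ≡ ⋁ᵢ yᵢ` and `⋀ᵢ xᵢ ≡ ⋀ᵢ yᵢ`
(families are encoded as sets of pairs). -/
def IsCompleteCongruence {L : Type*} [CompleteLattice L] (r : L → L → Prop) : Prop :=
  Equivalence r ∧
    ∀ P : Set (L × L), (∀ p ∈ P, r p.1 p.2) →
      r (sSup (Prod.fst '' P)) (sSup (Prod.snd '' P)) ∧
      r (sInf (Prod.fst '' P)) (sInf (Prod.snd '' P))

/-- A relation has finitely many equivalence classes. -/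
def HasFinitelyManyClasses {α : Type*} (r : α → α → Prop) : Prop :=
  (Set.range fun x : α => {y : α | r x y}).Finite

/-- A cofinite congruence: a complete lattice congruence with finitely many classes. -/
def IsCofiniteCongruence {L : Type*} [CompleteLattice L] (r : L → L → Prop) : Prop :=
  IsCompleteCongruence r ∧ HasFinitelyManyClasses r

/-- A profinite complete lattice: distinct elements are separated by some
cofinite congruence. -/
def IsProfinite (L : Type*) [CompleteLattice L] : Prop :=
  ∀ x y : L, x ≠ y → ∃ r : L → L → Prop, IsCofiniteCongruence r ∧ ¬ r x y

/-- `x` is compact: whenever `x ≤ ⋁X`, already `x ≤ ⋁X'` for some finite `X' ⊆ X`. -/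
def IsCompactElt {L : Type*} [CompleteLattice L] (x : L) : Prop :=
  ∀ X : Set L, x ≤ sSup X → ∃ X' ⊆ X, X'.Finite ∧ x ≤ sSup X'

/-- `x` is finitely generated: `x` is the minimum of its class for some
cofinite congruence, i.e. `x = π↓(x)`. -/
def FinitelyGeneratedElt {L : Type*} [CompleteLattice L] (x : L) : Prop :=
  ∃ r : L → L → Prop, IsCofiniteCongruence r ∧ ∀ y : L, r x y → x ≤ y

/-- `x` is a complete join-irreducible: no set avoiding `x` has join `x`. -/
def CompleteJoinIrred {L : Type*} [CompleteLattice L] (x : L) : Prop :=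
  ¬ ∃ X : Set L, x ∉ X ∧ sSup X = x

/-- Join semidistributivity: for finite nonempty `X`, if `x ∨ y = z` for all
`x ∈ X` then `(⋀X) ∨ y = z`. -/
def JoinSemidistrib (L : Type*) [CompleteLattice L] : Prop :=
  ∀ X : Set L, X.Finite → X.Nonempty → ∀ y z : L,
    (∀ x ∈ X, x ⊔ y = z) → sInf X ⊔ y = z

/-- Complete join semidistributivity: for any nonempty `X`, if `x ∨ y = z` for all
`x ∈ X` then `(⋀X) ∨ y = z`. -/
def CompletelyJoinSemidistrib (L : Type*) [CompleteLattice L] : Prop :=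
  ∀ X : Set L, X.Nonempty → ∀ y z : L,
    (∀ x ∈ X, x ⊔ y = z) → sInf X ⊔ y = z

/-- Join semidistributivity of the quotient lattice `L/≡`, expressed via
representatives: the join of classes `[x] ∨ [y]` is `[x ⊔ y]` and the (finite)
meet of classes `⋀[xᵢ]` is `[⋀ xᵢ]`. -/
def QuotientJoinSemidistrib {L : Type*} [CompleteLattice L] (r : L → L → Prop) : Prop :=
  ∀ X : Set L, X.Finite → X.Nonempty → ∀ y z : L,
    (∀ x ∈ X, r (x ⊔ y) z) → r (sInf X ⊔ y) z

/-- `π↓(x)`: the least element of the class of `x`, encoded as the meet of the class. -/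
def piDown {L : Type*} [CompleteLattice L] (r : L → L → Prop) (x : L) : L :=
  sInf {y | r x y}

namespace IsCompleteCongruence

variable {L : Type*} [CompleteLattice L] {r : L → L → Prop}

theorem sup_congr (h : IsCompleteCongruence r) {a b c d : L} (hab : r a b) (hcd : r c d) :
    r (a ⊔ c) (b ⊔ d) := by
  have := (h.2 {(a, b), (c, d)} (by simp [hab, hcd])).1
  simpa [Set.image_pair] using this

theorem inf_congr (h : IsCompleteCongruence r) {a b c d : L} (hab : r a b) (hcd : r c d) :
    r (a ⊓ c) (b ⊓ d) := by
  have := (h.2 {(a, b), (c, d)} (by simp [hab, hcd])).2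
  simpa [Set.image_pair] using this

theorem sInf_image_congr (h : IsCompleteCongruence r) (f : L → L) (X : Set L)
    (hf : ∀ x ∈ X, r (f x) x) : r (sInf (f '' X)) (sInf X) := by
  have := (h.2 ((fun x => (f x, x)) '' X) (by rintro _ ⟨x, hx, rfl⟩; exact hf x hx)).2
  simpa [Set.image_image] using this

/-- A nonempty set contained in a single class has its join and meet in that class. -/
theorem rel_of_subset_class (h : IsCompleteCongruence r) {X : Set L} {x : L} (hX : X.Nonempty)
    (hr : ∀ u ∈ X, r u x) : r (sSup X) x ∧ r (sInf X) x := by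
  have := h.2 ((fun u => (u, x)) '' X) (by rintro _ ⟨u, hu, rfl⟩; exact hr u hu)
  simpa [Set.image_image, hX.image_const] using this

theorem piDown_rel (h : IsCompleteCongruence r) (x : L) : r (piDown r x) x :=
  (h.rel_of_subset_class ⟨x, h.1.refl x⟩ fun _ hu => h.1.symm hu).2

theorem piDown_le_of_rel {x y : L} (hxy : r x y) : piDown r x ≤ y := sInf_le hxy

theorem piDown_congr (h : IsCompleteCongruence r) {x y : L} (hxy : r x y) :
    piDown r x = piDown r y := by
  unfold piDown
  congr 1
  ext w
  exact ⟨fun hw => h.1.trans (h.1.symm hxy) hw, fun hw => h.1.trans hxy hw⟩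

theorem piDown_mono (h : IsCompleteCongruence r) : Monotone (piDown r) := by
  intro a b hab
  have hr : r (a ⊓ piDown r b) a := by
    simpa [inf_eq_left.2 hab] using h.inf_congr (h.1.refl a) (h.piDown_rel b)
  exact (piDown_le_of_rel (h.1.symm hr)).trans inf_le_right

theorem piDown_sup (h : IsCompleteCongruence r) (x y : L) :
    piDown r x ⊔ piDown r y = piDown r (x ⊔ y) :=
  le_antisymm (sup_le (h.piDown_mono le_sup_left) (h.piDown_mono le_sup_right))
    (piDown_le_of_rel (h.1.symm (h.sup_congr (h.piDown_rel x) (h.piDown_rel y))))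

/-- Quotient join semidistributivity only has to be tested on equations between minimal
representatives. -/
theorem quotientJoinSemidistrib_of_piDown (h : IsCompleteCongruence r)
    (H : ∀ X : Set L, X.Finite → X.Nonempty → ∀ y z : L,
      (∀ x ∈ X, x ⊔ y = piDown r z) → sInf X ⊔ y = piDown r z) :
    QuotientJoinSemidistrib r := by
  intro X hX hne y z hxyz
  have key := H (piDown r '' X) (hX.image _) (hne.image _) (piDown r y) z (by
    rintro _ ⟨x, hx, rfl⟩
    rw [h.piDown_sup, h.piDown_congr (hxyz x hx)])
  have h1 : r (sInf (piDown r '' X) ⊔ piDown r y) (sInf X ⊔ y) :=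
    h.sup_congr (h.sInf_image_congr _ X fun x _ => h.piDown_rel x) (h.piDown_rel y)
  rw [key] at h1
  exact h.1.trans (h.1.symm h1) (h.piDown_rel z)

end IsCompleteCongruence

namespace IsCofiniteCongruence

variable {L : Type*} [CompleteLattice L] {r : L → L → Prop}

/-- Modulo a cofinite congruence, every meet is a finite meet. -/
theorem exists_finite_sInf_rel (h : IsCofiniteCongruence r) (X : Set L) :
    ∃ X₀ ⊆ X, X₀.Finite ∧ (X.Nonempty → X₀.Nonempty) ∧ r (sInf X) (sInf X₀) := by
  have hfin : ((fun x : L => {y : L | r x y}) '' X).Finite :=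
    h.2.subset (Set.image_subset_range _ _)
  obtain ⟨X₀, hsub, hX₀, him⟩ := (Set.exists_subset_image_finite_and
    (p := fun t => t = (fun x : L => {y : L | r x y}) '' X)).1 ⟨_, subset_rfl, hfin, rfl⟩
  have hrep : ∀ x ∈ X, ∃ x₀ ∈ X₀, r x x₀ := by
    intro x hx
    obtain ⟨x₀, hx₀, he⟩ : (fun x : L => {y : L | r x y}) x ∈
        (fun x : L => {y : L | r x y}) '' X₀ := by
      rw [him]; exact ⟨x, hx, rfl⟩
    refine ⟨x₀, hx₀, ?_⟩
    have : x₀ ∈ {y : L | r x₀ y} := h.1.1.refl x₀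
    rwa [show {y : L | r x₀ y} = {y : L | r x y} from he] at this
  refine ⟨X₀, hsub, hX₀, fun ⟨x, hx⟩ => (hrep x hx).imp fun _ hx₀ => hx₀.1, ?_⟩
  have := (h.1.2 {p | p.1 ∈ X ∧ p.2 ∈ X₀ ∧ r p.1 p.2} fun p hp => hp.2.2).2
  convert this using 2
  · ext x
    constructor
    · intro hx
      obtain ⟨x₀, hx₀, hr⟩ := hrep x hx
      exact ⟨(x, x₀), ⟨hx, hx₀, hr⟩, rfl⟩
    · rintro ⟨p, hp, rfl⟩
      exact hp.1
  · ext x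
    constructor
    · intro hx
      exact ⟨(x, x), ⟨hsub hx, hx, h.1.1.refl x⟩, rfl⟩
    · rintro ⟨p, hp, rfl⟩
      exact hp.2.1

theorem finite_range_piDown (h : IsCofiniteCongruence r) : (Set.range (piDown r)).Finite := by
  have : Set.range (piDown r) = sInf '' (Set.range fun x : L => {y : L | r x y}) := by
    rw [← Set.range_comp]; rfl
  rw [this]
  exact h.2.image _

end IsCofiniteCongruence

section

variable {L : Type*} [CompleteLattice L]

theorem FinitelyGeneratedElt.widelyGenerated {x : L} (hx : FinitelyGeneratedElt x) :
    WidelyGenerated x := by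
  obtain ⟨r, hr, hmin⟩ := hx
  intro y hyx
  -- `w` lies in a maximal class among those meeting `[y, x)`.
  obtain ⟨w, hw⟩ := Set.Finite.exists_maximalFor' (piDown r) {w | y ≤ w ∧ w < x}
    (hr.finite_range_piDown.subset (Set.image_subset_range _ _)) ⟨y, le_rfl, hyx⟩
  obtain ⟨⟨hyw, hwx⟩, hmax⟩ := hw
  have hS : w ∈ {u | r u w ∧ u ≤ x} := ⟨hr.1.1.refl w, hwx.le⟩
  have hrel := (hr.1.rel_of_subset_class ⟨w, hS⟩ fun u hu => hu.1).1
  have hle : w ≤ sSup {u | r u w ∧ u ≤ x} := le_sSup hS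
  refine ⟨sSup {u | r u w ∧ u ≤ x}, ⟨?_, ?_⟩, hyw.trans hle⟩
  · refine lt_of_le_of_ne (sSup_le fun u hu => hu.2) fun he => ?_
    rw [he] at hrel
    exact hwx.not_ge (hmin w hrel)
  · intro u hu hux
    have hwu : w ≤ u := hle.trans hu.le
    have heq : piDown r u = piDown r w :=
      le_antisymm (hmax ⟨hyw.trans hwu, hux⟩ (hr.1.piDown_mono hwu)) (hr.1.piDown_mono hwu)
    have huw : r u w :=
      hr.1.1.trans (hr.1.1.symm (hr.1.piDown_rel u)) (heq ▸ hr.1.piDown_rel w)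
    exact hu.not_ge (le_sSup ⟨huw, hux.le⟩)

theorem JoinSemidistrib.quotient (h : JoinSemidistrib L) {r : L → L → Prop}
    (hr : IsCofiniteCongruence r) : QuotientJoinSemidistrib r :=
  hr.1.quotientJoinSemidistrib_of_piDown fun X hX hne y _ hxyz => h X hX hne y _ hxyz

theorem CompletelyJoinSemidistrib.of_quotient (hL : IsProfinite L)
    (h : ∀ r : L → L → Prop, IsCofiniteCongruence r → QuotientJoinSemidistrib r) :
    CompletelyJoinSemidistrib L := by
  intro X hne y z hxyz
  by_contra hcon
  obtain ⟨r, hr, hnr⟩ := hL _ _ hcon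
  obtain ⟨X₀, hsub, hfin, hne₀, hrel⟩ := hr.exists_finite_sInf_rel X
  have key := h r hr X₀ hfin (hne₀ hne) y z fun x hx => by
    rw [hxyz x (hsub hx)]; exact hr.1.1.refl z
  exact hnr (hr.1.1.trans (hr.1.sup_congr hrel (hr.1.1.refl y)) key)

theorem CompletelyJoinSemidistrib.exists_canonicalJoinRep (h : CompletelyJoinSemidistrib L)
    {x : L} (hx : WidelyGenerated x) : ∃ U : Set L, IsCanonicalJoinRep U x := by
  -- `j x'` is the least element whose join with the lower cover `x'` is `x`.
  let j : L → L := fun x' => sInf {w | w ⊔ x' = x}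
  have hj : ∀ x', x' ⋖ x → j x' ⊔ x' = x := fun x' hc =>
    h {w | w ⊔ x' = x} ⟨x, sup_eq_left.2 hc.le⟩ x' x fun _ hw => hw
  have hjle : ∀ x', x' ⋖ x → ¬ j x' ≤ x' := fun x' hc hle => by
    have := hj x' hc
    rw [sup_eq_right.2 hle] at this
    exact hc.ne this
  have hjlex : ∀ x', x' ⋖ x → j x' ≤ x := fun x' hc => le_sup_left.trans (hj x' hc).le
  have hmin : ∀ x' v, x' ⋖ x → v ≤ x → ¬ v ≤ x' → j x' ≤ v := by
    intro x' v hc hv hnv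
    refine sInf_le ?_
    rcases hc.eq_or_eq (le_sup_right : x' ≤ v ⊔ x') (sup_le hv hc.le) with he | he
    · exact absurd (le_sup_left.trans he.le) hnv
    · exact he
  have href : ∀ V : Set L, sSup V = x → ∀ x', x' ⋖ x → ∃ v ∈ V, j x' ≤ v := by
    intro V hV x' hc
    by_contra! hcon
    refine hc.lt.not_ge (hV ▸ sSup_le fun v hv => ?_)
    by_contra hnv
    exact hcon v hv (hmin x' v hc (hV ▸ le_sSup hv) hnv)
  refine ⟨j '' {x' | x' ⋖ x}, ?_, ?_, ?_⟩
  · have hle : sSup (j '' {x' | x' ⋖ x}) ≤ x := by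
      refine sSup_le ?_
      rintro _ ⟨x', hc, rfl⟩
      exact hjlex x' hc
    by_contra hne
    obtain ⟨x', hc, hx'⟩ := hx _ (lt_of_le_of_ne hle hne)
    exact hjle x' hc ((le_sSup (Set.mem_image_of_mem j hc)).trans hx')
  · intro U' hU' hsup
    obtain ⟨_, ⟨x', hc, rfl⟩, hnot⟩ := Set.exists_of_ssubset hU'
    obtain ⟨v, hv, hle⟩ := href U' hsup x' hc
    obtain ⟨x'', hc', rfl⟩ := hU'.1 hv
    have hne : x' ≠ x'' := fun he => hnot (he ▸ hv)
    -- Distinct lower covers are incomparable, so `j x'' ≤ x'`, which puts `j x'` below `x'`.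
    refine hjle x' hc (hle.trans (hmin x'' x' hc' hc.le fun hle' => ?_))
    exact hc.2 (lt_of_le_of_ne hle' hne) hc'.lt
  · rintro V hV _ ⟨x', hc, rfl⟩
    exact href V hV x' hc

theorem quotient_of_finitelyGenerated
    (h : ∀ x : L, FinitelyGeneratedElt x → ∃ U : Set L, IsCanonicalJoinRep U x)
    {r : L → L → Prop} (hr : IsCofiniteCongruence r) : QuotientJoinSemidistrib r := by
  refine hr.1.quotientJoinSemidistrib_of_piDown fun X _ hne y z hxyz => ?_
  obtain ⟨U, hU, -, href⟩ := h (piDown r z) ⟨r, hr, fun w hw =>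
    IsCompleteCongruence.piDown_le_of_rel
      (hr.1.1.trans (hr.1.1.symm (hr.1.piDown_rel z)) hw)⟩
  obtain ⟨x₁, hx₁⟩ := hne
  refine le_antisymm ?_ ?_
  · rw [← hxyz x₁ hx₁]
    exact sup_le_sup_right (sInf_le hx₁) y
  · rw [← hU]
    refine sSup_le fun u hu => ?_
    by_cases huy : u ≤ y
    · exact huy.trans le_sup_right
    · refine (le_sInf fun x hx => ?_).trans le_sup_left
      obtain ⟨v, hv, huv⟩ := href {x, y} (by rw [sSup_pair, hxyz x hx]) u hu
      rcases hv with rfl | rfl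
      · exact huv
      · exact absurd huv huy

end

/-- For a profinite complete lattice `L`, the following are equivalent:
(i) `L` is join semidistributive; (ii) `L` is completely join semidistributive; (iii) for
every cofinite congruence `≡` on `L`, the quotient lattice `L/≡` is join semidistributive;
(iv) every widely generated element of `L` has a canonical join representation; (v) every
finitely generated element of `L` has a canonical join representation. -/
theorem extended_weak_order_stmt18 {L : Type*} [CompleteLattice L]
    (hL : IsProfinite L) :
    (JoinSemidistrib L ↔ CompletelyJoinSemidistrib L) ∧
    (JoinSemidistrib L ↔
      ∀ r : L → L → Prop, IsCofiniteCongruence r → QuotientJoinSemidistrib r) ∧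
    (JoinSemidistrib L ↔
      ∀ x : L, WidelyGenerated x → ∃ U : Set L, IsCanonicalJoinRep U x) ∧
    (JoinSemidistrib L ↔
      ∀ x : L, FinitelyGeneratedElt x → ∃ U : Set L, IsCanonicalJoinRep U x) := by
  have h21 : CompletelyJoinSemidistrib L → JoinSemidistrib L := fun h X _ hne => h X hne
  have h32 := CompletelyJoinSemidistrib.of_quotient hL
  have h13 : JoinSemidistrib L →
      ∀ r : L → L → Prop, IsCofiniteCongruence r → QuotientJoinSemidistrib r :=
    fun h _ hr => h.quotient hr
  have h24 : CompletelyJoinSemidistrib L →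
      ∀ x : L, WidelyGenerated x → ∃ U : Set L, IsCanonicalJoinRep U x :=
    fun h _ hx => h.exists_canonicalJoinRep hx
  have h53 : (∀ x : L, FinitelyGeneratedElt x → ∃ U : Set L, IsCanonicalJoinRep U x) →
      ∀ r : L → L → Prop, IsCofiniteCongruence r → QuotientJoinSemidistrib r :=
    fun h _ hr => quotient_of_finitelyGenerated h hr
  refine ⟨⟨fun h => h32 (h13 h), h21⟩, ⟨h13, fun h => h21 (h32 h)⟩,
    ⟨fun h => h24 (h32 (h13 h)), fun h => ?_⟩,
    ⟨fun h x hx => h24 (h32 (h13 h)) x hx.widelyGenerated, fun h => h21 (h32 (h53 h))⟩⟩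
  exact h21 (h32 (h53 fun x hx => h x hx.widelyGenerated))
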